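/- arXiv:2605.15933 — 2 statements merged into one kernel-verified Lean document; each statement's English description precedes it below -/
import Mathlib

section
/- Short exact sequence for the cohomology of the BGG output complex: with the BGG setup (Sⁱ injective for i < j, Sʲ bijective, Sⁱ surjective for i > j), for every i there is a short exact sequence 0 → coker(S̃^{i-1}) → H^i(C•) → ker(S̃^i) → 0, where S̃^i : H^i(A•) → H^{i+1}(B•) is the map induced on cohomology by S. -/
open Function

variable (R : Type) [CommRing R]

/-- Cocycles in degree `i+1`. -/
abbrev cocycles {X : ℤ → Type} [∀ i, AddCommGroup (X i)] [∀ i, Module R (X i)]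
    (d : ∀ i : ℤ, X i →ₗ[R] X (i + 1)) (i : ℤ) : Submodule R (X (i + 1)) :=
  LinearMap.ker (d (i + 1))

/-- Coboundaries in degree `i+1`, viewed inside the cocycles. -/
abbrev cobounds {X : ℤ → Type} [∀ i, AddCommGroup (X i)] [∀ i, Module R (X i)]
    (d : ∀ i : ℤ, X i →ₗ[R] X (i + 1)) (i : ℤ) : Submodule R (cocycles R d i) :=
  (LinearMap.range (d i)).comap (cocycles R d i).subtype

/-- Cohomology in degree `i+1`: `ker (d (i+1)) / im (d i)`. -/
abbrev Hmod {X : ℤ → Type} [∀ i, AddCommGroup (X i)] [∀ i, Module R (X i)]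
    (d : ∀ i : ℤ, X i →ₗ[R] X (i + 1)) (i : ℤ) : Type :=
  cocycles R d i ⧸ cobounds R d i

/-- The map induced on cohomology by a chain map `f`. -/
noncomputable def inducedH {X Y : ℤ → Type}
    [∀ i, AddCommGroup (X i)] [∀ i, Module R (X i)]
    [∀ i, AddCommGroup (Y i)] [∀ i, Module R (Y i)]
    (dX : ∀ i : ℤ, X i →ₗ[R] X (i + 1)) (dY : ∀ i : ℤ, Y i →ₗ[R] Y (i + 1))
    (f : ∀ i : ℤ, X i →ₗ[R] Y i)
    (hf : ∀ i : ℤ, (dY i).comp (f i) = (f (i + 1)).comp (dX i)) (i : ℤ) :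
    Hmod R dX i →ₗ[R] Hmod R dY i :=
  Submodule.mapQ (cobounds R dX i) (cobounds R dY i)
    ((f (i + 1)).restrict (p := cocycles R dX i) (q := cocycles R dY i)
      (fun x hx => by
        have h := congrArg (fun g => g x) (hf (i + 1))
        simp only [LinearMap.coe_comp, Function.comp_apply] at h
        simp only [cocycles, LinearMap.mem_ker] at hx ⊢
        rw [h, hx, map_zero]))
    (fun x hx => by
      obtain ⟨y, hy⟩ := hx
      have h := congrArg (fun g => g y) (hf i)
      simp only [LinearMap.coe_comp, Function.comp_apply] at h
      refine ⟨f i y, ?_⟩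
      simpa [LinearMap.restrict_apply, hy] using h.symm ▸ congrArg (f (i+1)) hy)

/-!
Glue `A` and `B` into the cone with differential `(a, b) ↦ (d a, S a - d b)`.  The inclusion of `B`
and the projection to `A` give the exact sequence
`H(A) → H(B) → H(cone) → H(A) → H(B)`, whose outer maps are induced by `S`, so `H(cone)` is an
extension of `ker S̃` by `coker S̃`.  Wherever `S` is injective, its contribution to the cone cancels
against its image in `B`, leaving `coker S`; wherever it is surjective, it cancels all of `B`,
leaving `ker S`.  At the junction the cancellation of the bijective `Sʲ` turns the cone differential
into the zigzag `d (Sʲ)⁻¹ d`.  Hence the output complex has the cohomology of the cone.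
-/

variable {Λ : Type*} [Ring Λ]

section Homology

variable {L₁ M₁ N₁ : Type*} [AddCommGroup L₁] [AddCommGroup M₁] [AddCommGroup N₁]
  [Module Λ L₁] [Module Λ M₁] [Module Λ N₁]
  {L₂ M₂ N₂ : Type*} [AddCommGroup L₂] [AddCommGroup M₂] [AddCommGroup N₂]
  [Module Λ L₂] [Module Λ M₂] [Module Λ N₂]
  {L₃ M₃ N₃ : Type*} [AddCommGroup L₃] [AddCommGroup M₃] [AddCommGroup N₃]
  [Module Λ L₃] [Module Λ M₃] [Module Λ N₃]

/-- The homology `ker g₁ / im f₁` at the middle of `L₁ → M₁ → N₁`.  Since `g₁ ∘ f₁ = 0` is not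
imposed, `im f₁` is cut down to `ker g₁`; thus `Hmod R d i` unfolds to
`HomologyAt (d i) (d (i + 1))`. -/
abbrev HomologyAt (f₁ : L₁ →ₗ[Λ] M₁) (g₁ : M₁ →ₗ[Λ] N₁) : Type _ :=
  LinearMap.ker g₁ ⧸ (LinearMap.range f₁).submoduleOf (LinearMap.ker g₁)

namespace HomologyAt

variable {f₁ : L₁ →ₗ[Λ] M₁} {g₁ : M₁ →ₗ[Λ] N₁} {f₂ : L₂ →ₗ[Λ] M₂} {g₂ : M₂ →ₗ[Λ] N₂}
  {f₃ : L₃ →ₗ[Λ] M₃} {g₃ : M₃ →ₗ[Λ] N₃}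

/-- The map on homology induced by `φ : M₁ → M₂`.  Only the preservation of cycles and boundaries is
required, so that neither signs nor maps on the outer terms have to be chosen. -/
def map (φ : M₁ →ₗ[Λ] M₂) (hZ : ∀ x, g₁ x = 0 → g₂ (φ x) = 0)
    (hB : LinearMap.range f₁ ≤ (LinearMap.range f₂).comap φ) :
    HomologyAt f₁ g₁ →ₗ[Λ] HomologyAt f₂ g₂ :=
  Submodule.mapQ _ _ (φ.restrict hZ) fun _ hx => hB hx

/-- The map on homology induced by a morphism from `L₁ → M₁ → N₁` to `L₂ → M₂ → N₂`. -/
def mapOfComm (φ : M₁ →ₗ[Λ] M₂) {φL : L₁ →ₗ[Λ] L₂} {φN : N₁ →ₗ[Λ] N₂}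
    (hL : f₂ ∘ₗ φL = φ ∘ₗ f₁) (hN : g₂ ∘ₗ φ = φN ∘ₗ g₁) :
    HomologyAt f₁ g₁ →ₗ[Λ] HomologyAt f₂ g₂ :=
  map φ (fun x hx => (LinearMap.congr_fun hN x).trans (by simp [hx]))
    (by
      rintro _ ⟨y, rfl⟩
      exact ⟨φL y, LinearMap.congr_fun hL y⟩)

variable {φ : M₁ →ₗ[Λ] M₂} {hZ : ∀ x, g₁ x = 0 → g₂ (φ x) = 0}
  {hB : LinearMap.range f₁ ≤ (LinearMap.range f₂).comap φ}
  {ψ : M₂ →ₗ[Λ] M₃} {hZ' : ∀ x, g₂ x = 0 → g₃ (ψ x) = 0}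
  {hB' : LinearMap.range f₂ ≤ (LinearMap.range f₃).comap ψ}

theorem map_mk_eq_zero_iff (x : LinearMap.ker g₁) :
    map φ hZ hB (Submodule.Quotient.mk x) = 0 ↔ φ x ∈ LinearMap.range f₂ :=
  Submodule.Quotient.mk_eq_zero _

theorem mk_mem_range_map_iff (y : LinearMap.ker g₂) :
    Submodule.Quotient.mk y ∈ Set.range (map φ hZ hB) ↔
      ∃ x, g₁ x = 0 ∧ φ x - y ∈ LinearMap.range f₂ := by
  constructor
  · rintro ⟨q, hq⟩
    obtain ⟨x, rfl⟩ := Submodule.Quotient.mk_surjective _ q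
    exact ⟨x, x.2, (Submodule.Quotient.eq ((LinearMap.range f₂).submoduleOf _)).1 hq⟩
  · rintro ⟨x, hx, hxy⟩
    exact ⟨Submodule.Quotient.mk ⟨x, hx⟩, (Submodule.Quotient.eq _).2 hxy⟩

theorem exact_map
    (h : ∀ y, g₂ y = 0 → (ψ y ∈ LinearMap.range f₃ ↔
      ∃ x, g₁ x = 0 ∧ φ x - y ∈ LinearMap.range f₂)) :
    Function.Exact (map φ hZ hB) (map ψ hZ' hB') := by
  intro q
  obtain ⟨y, rfl⟩ := Submodule.Quotient.mk_surjective _ q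
  rw [map_mk_eq_zero_iff, mk_mem_range_map_iff]
  exact h y y.2

theorem map_bijective (hinj : ∀ x, g₁ x = 0 → φ x ∈ LinearMap.range f₂ → x ∈ LinearMap.range f₁)
    (hsurj : ∀ y, g₂ y = 0 → ∃ x, g₁ x = 0 ∧ φ x - y ∈ LinearMap.range f₂) :
    Function.Bijective (map φ hZ hB) := by
  constructor
  · refine (injective_iff_map_eq_zero _).2 fun q hq => ?_
    obtain ⟨x, rfl⟩ := Submodule.Quotient.mk_surjective _ q
    exact (Submodule.Quotient.mk_eq_zero _).2 (hinj x x.2 ((map_mk_eq_zero_iff x).1 hq))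
  · intro q
    obtain ⟨y, rfl⟩ := Submodule.Quotient.mk_surjective _ q
    exact (mk_mem_range_map_iff y).2 (hsurj y y.2)

end HomologyAt

theorem exists_shortExact_of_exact {H₁ H₂ H₃ H₄ H₅ : Type*}
    [AddCommGroup H₁] [AddCommGroup H₂] [AddCommGroup H₃] [AddCommGroup H₄] [AddCommGroup H₅]
    [Module Λ H₁] [Module Λ H₂] [Module Λ H₃] [Module Λ H₄] [Module Λ H₅]
    {s : H₁ →ₗ[Λ] H₂} {ι : H₂ →ₗ[Λ] H₃} {π : H₃ →ₗ[Λ] H₄} {t : H₄ →ₗ[Λ] H₅}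
    (hsι : Function.Exact s ι) (hιπ : Function.Exact ι π) (hπt : Function.Exact π t) :
    ∃ (f : (H₂ ⧸ LinearMap.range s) →ₗ[Λ] H₃) (g : H₃ →ₗ[Λ] H₄),
      Function.Injective f ∧ LinearMap.range f = LinearMap.ker g ∧
        LinearMap.range g = LinearMap.ker t :=
  ⟨(LinearMap.range s).liftQ ι hsι.linearMap_ker_eq.ge, π,
    LinearMap.injective_range_liftQ_of_exact hsι,
    (Submodule.range_liftQ ..).trans hιπ.linearMap_ker_eq.symm, hπt.linearMap_ker_eq.symm⟩

end Homology

section Cone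

variable {A₀ A₁ A₂ B₀ B₁ B₂ : Type*}
  [AddCommGroup A₀] [AddCommGroup A₁] [AddCommGroup A₂]
  [AddCommGroup B₀] [AddCommGroup B₁] [AddCommGroup B₂]
  [Module Λ A₀] [Module Λ A₁] [Module Λ A₂]
  [Module Λ B₀] [Module Λ B₁] [Module Λ B₂]

/-- The differential `(a, b) ↦ (d a, S a - d b)` of the mapping cone of `S`. -/
def coneD (dA : A₁ →ₗ[Λ] A₂) (dB : B₁ →ₗ[Λ] B₂) (S : A₁ →ₗ[Λ] B₂) : A₁ × B₁ →ₗ[Λ] A₂ × B₂ :=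
  (dA ∘ₗ LinearMap.fst Λ A₁ B₁).prod (S.coprod (-dB))

theorem coneD_apply_eq_iff {dA : A₁ →ₗ[Λ] A₂} {dB : B₁ →ₗ[Λ] B₂} {S : A₁ →ₗ[Λ] B₂}
    (z : A₁ × B₁) (w : A₂ × B₂) :
    coneD dA dB S z = w ↔ dA z.1 = w.1 ∧ S z.1 - dB z.2 = w.2 := by
  simp [coneD, Prod.ext_iff, sub_eq_add_neg]

theorem coneD_apply_eq_zero_iff {dA : A₁ →ₗ[Λ] A₂} {dB : B₁ →ₗ[Λ] B₂} {S : A₁ →ₗ[Λ] B₂}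
    (z : A₁ × B₁) : coneD dA dB S z = 0 ↔ dA z.1 = 0 ∧ S z.1 = dB z.2 := by
  rw [coneD_apply_eq_iff, Prod.fst_zero, Prod.snd_zero, sub_eq_zero]

theorem mem_range_coneD_iff {dA : A₀ →ₗ[Λ] A₁} {dB : B₀ →ₗ[Λ] B₁} {S : A₀ →ₗ[Λ] B₁}
    (z : A₁ × B₁) :
    z ∈ LinearMap.range (coneD dA dB S) ↔ ∃ x y, dA x = z.1 ∧ S x - dB y = z.2 := by
  simp only [LinearMap.mem_range, Prod.exists, coneD_apply_eq_iff]

variable {dA₀ : A₀ →ₗ[Λ] A₁} {dA₁ : A₁ →ₗ[Λ] A₂}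
  {dB₀ : B₀ →ₗ[Λ] B₁} {dB₁ : B₁ →ₗ[Λ] B₂}
  {S₀ : A₀ →ₗ[Λ] B₁} {S₁ : A₁ →ₗ[Λ] B₂}

section ExactSequence

variable (dA₀ dA₁ dB₀ dB₁ S₀ S₁)

/-- The map from the homology of `B` to that of the cone induced by the inclusion `b ↦ (0, b)`. -/
def coneHomologyInr :
    HomologyAt dB₀ dB₁ →ₗ[Λ] HomologyAt (coneD dA₀ dB₀ S₀) (coneD dA₁ dB₁ S₁) :=
  HomologyAt.map (LinearMap.inr Λ A₁ B₁)
    (fun b hb => (coneD_apply_eq_zero_iff _).2 (by simp [hb]))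
    (by
      rintro _ ⟨y, rfl⟩
      exact (mem_range_coneD_iff _).2 ⟨0, -y, by simp⟩)

/-- The map from the homology of the cone to that of `A` induced by the projection
`(a, b) ↦ a`. -/
def coneHomologyFst :
    HomologyAt (coneD dA₀ dB₀ S₀) (coneD dA₁ dB₁ S₁) →ₗ[Λ] HomologyAt dA₀ dA₁ :=
  HomologyAt.map (LinearMap.fst Λ A₁ B₁)
    (fun z hz => ((coneD_apply_eq_zero_iff z).1 hz).1)
    (by
      rintro _ ⟨z, rfl⟩
      exact ⟨z.1, rfl⟩)

variable {dA₀ dA₁ dB₀ dB₁ S₀ S₁}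
  {A B₃ : Type*} [AddCommGroup A] [AddCommGroup B₃] [Module Λ A] [Module Λ B₃]
  {dA : A →ₗ[Λ] A₀} {dB₂ : B₂ →ₗ[Λ] B₃}

theorem exact_map_coneHomologyInr {hZ : ∀ x, dA₀ x = 0 → dB₁ (S₀ x) = 0}
    {hB : LinearMap.range dA ≤ (LinearMap.range dB₀).comap S₀} :
    Function.Exact (HomologyAt.map S₀ hZ hB) (coneHomologyInr dA₀ dA₁ dB₀ dB₁ S₀ S₁) := by
  refine HomologyAt.exact_map fun b _ => ?_
  rw [mem_range_coneD_iff]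
  constructor
  · rintro ⟨x, y, hx, hxy⟩
    exact ⟨x, hx, y, by rw [← show S₀ x - dB₀ y = b from hxy, sub_sub_cancel]⟩
  · rintro ⟨x, hx, y, hxy⟩
    exact ⟨x, y, hx, by rw [hxy, sub_sub_cancel, LinearMap.inr_apply]⟩

theorem exact_coneHomologyInr_coneHomologyFst (hS : dB₁ ∘ₗ S₀ = S₁ ∘ₗ dA₀) :
    Function.Exact (coneHomologyInr dA₀ dA₁ dB₀ dB₁ S₀ S₁)
      (coneHomologyFst dA₀ dA₁ dB₀ dB₁ S₀ S₁) := by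
  refine HomologyAt.exact_map fun ⟨a, b⟩ hab => ?_
  obtain ⟨-, hb⟩ := (coneD_apply_eq_zero_iff _).1 hab
  simp only [mem_range_coneD_iff]
  constructor
  · rintro ⟨x, hx : dA₀ x = a⟩
    have hcycle : dB₁ (b - S₀ x) = 0 := by
      rw [map_sub, ← hb, ← hx, sub_eq_zero]
      exact (LinearMap.congr_fun hS x).symm
    exact ⟨b - S₀ x, hcycle, -x, 0, by simp [hx]⟩
  · rintro ⟨_, _, x, _, hx, _⟩
    exact ⟨-x, by simpa [neg_eq_iff_eq_neg] using hx⟩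

theorem exact_coneHomologyFst_map (hS : dB₁ ∘ₗ S₀ = S₁ ∘ₗ dA₀)
    {hZ : ∀ x, dA₁ x = 0 → dB₂ (S₁ x) = 0}
    {hB : LinearMap.range dA₀ ≤ (LinearMap.range dB₁).comap S₁} :
    Function.Exact (coneHomologyFst dA₀ dA₁ dB₀ dB₁ S₀ S₁) (HomologyAt.map S₁ hZ hB) := by
  refine HomologyAt.exact_map fun a ha => ?_
  constructor
  · rintro ⟨b, hb⟩
    exact ⟨(a, b), (coneD_apply_eq_zero_iff _).2 ⟨ha, hb.symm⟩, 0, by simp⟩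
  · rintro ⟨⟨a', b⟩, hz, x, hx⟩
    obtain ⟨-, hb⟩ := (coneD_apply_eq_zero_iff _).1 hz
    have hS₁x : dB₁ (S₀ x) = S₁ (a' - a) := by
      rw [← show dA₀ x = a' - a from hx]
      exact LinearMap.congr_fun hS x
    exact ⟨b - S₀ x, by rw [map_sub, ← hb, hS₁x, map_sub, sub_sub_cancel]⟩

theorem exists_shortExact_of_coneHomology_equiv {H : Type*} [AddCommGroup H] [Module Λ H]
    {S : A →ₗ[Λ] B₀} {S₂ : A₂ →ₗ[Λ] B₃} (hS : dB₀ ∘ₗ S = S₀ ∘ₗ dA)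
    (hS₀ : dB₁ ∘ₗ S₀ = S₁ ∘ₗ dA₀) (hS₁ : dB₂ ∘ₗ S₁ = S₂ ∘ₗ dA₁)
    (e : HomologyAt (coneD dA₀ dB₀ S₀) (coneD dA₁ dB₁ S₁) ≃ₗ[Λ] H) :
    ∃ (f : (HomologyAt dB₀ dB₁ ⧸ LinearMap.range (HomologyAt.mapOfComm S₀ hS hS₀)) →ₗ[Λ] H)
      (g : H →ₗ[Λ] HomologyAt dA₀ dA₁),
      Function.Injective f ∧ LinearMap.range f = LinearMap.ker g ∧
        LinearMap.range g = LinearMap.ker (HomologyAt.mapOfComm S₁ hS₀ hS₁) :=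
  exists_shortExact_of_exact
    (LinearEquiv.postcomp_exact_iff_exact (e := e) |>.2 exact_map_coneHomologyInr)
    (LinearEquiv.conj_exact_iff_exact _ _ e |>.2 (exact_coneHomologyInr_coneHomologyFst hS₀))
    (LinearEquiv.precomp_exact_iff_exact (e := e.symm) |>.2 (exact_coneHomologyFst_map hS₀))

end ExactSequence

section Output

variable {C₀ C₁ C₂ : Type*} [AddCommGroup C₀] [AddCommGroup C₁] [AddCommGroup C₂]
  [Module Λ C₀] [Module Λ C₁] [Module Λ C₂]
  {dC₀ : C₀ →ₗ[Λ] C₁} {dC₁ : C₁ →ₗ[Λ] C₂}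

theorem nonempty_coneHomology_equiv_of_coker
    (hdB : dB₁ ∘ₗ dB₀ = 0) (hS : dB₁ ∘ₗ S₀ = S₁ ∘ₗ dA₀) (hS₁ : Function.Injective S₁)
    {P₀ : B₀ →ₗ[Λ] C₀} {P₁ : B₁ →ₗ[Λ] C₁}
    (hP₀ : Function.Surjective P₀) (hP₁ : Function.Surjective P₁)
    (hker : LinearMap.ker P₁ = LinearMap.range S₀) (hP : dC₀ ∘ₗ P₀ = P₁ ∘ₗ dB₀)
    (hcycle : ∀ b, dC₁ (P₁ b) = 0 ↔ ∃ a, dA₁ a = 0 ∧ S₁ a = dB₁ b) :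
    Nonempty (HomologyAt (coneD dA₀ dB₀ S₀) (coneD dA₁ dB₁ S₁) ≃ₗ[Λ] HomologyAt dC₀ dC₁) := by
  have hPS (x : A₀) : P₁ (S₀ x) = 0 := hker.ge ⟨x, rfl⟩
  have hPd (y : B₀) : dC₀ (P₀ y) = P₁ (dB₀ y) := LinearMap.congr_fun hP y
  have hZ (z : A₁ × B₁) (hz : coneD dA₁ dB₁ S₁ z = 0) : dC₁ (P₁ z.2) = 0 :=
    (hcycle z.2).2 ⟨z.1, (coneD_apply_eq_zero_iff z).1 hz⟩
  have hB : LinearMap.range (coneD dA₀ dB₀ S₀) ≤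
      (LinearMap.range dC₀).comap (P₁ ∘ₗ LinearMap.snd Λ A₁ B₁) := by
    intro z hz
    obtain ⟨x, y, -, hxy⟩ := (mem_range_coneD_iff z).1 hz
    exact ⟨P₀ (-y), by simp [hPd, ← hxy, hPS]⟩
  refine ⟨LinearEquiv.ofBijective (HomologyAt.map (P₁ ∘ₗ LinearMap.snd Λ A₁ B₁) hZ hB)
    (HomologyAt.map_bijective ?_ ?_)⟩
  · rintro ⟨a, b⟩ hz ⟨c, hc : dC₀ c = P₁ b⟩
    obtain ⟨y, rfl⟩ := hP₀ c
    obtain ⟨x, hx⟩ : b - dB₀ y ∈ LinearMap.range S₀ := by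
      rw [← hker, LinearMap.mem_ker, map_sub, ← hc, hPd, sub_self]
    have hxa : dA₀ x = a := hS₁ <| calc
      S₁ (dA₀ x) = dB₁ (S₀ x) := (LinearMap.congr_fun hS x).symm
      _ = dB₁ b - dB₁ (dB₀ y) := by rw [hx, map_sub]
      _ = dB₁ b := by rw [show dB₁ (dB₀ y) = 0 from LinearMap.congr_fun hdB y, sub_zero]
      _ = S₁ a := ((coneD_apply_eq_zero_iff _).1 hz).2.symm
    exact (mem_range_coneD_iff _).2 ⟨x, -y, hxa, by simp [hx]⟩
  · intro c hc
    obtain ⟨b, rfl⟩ := hP₁ c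
    obtain ⟨a, hab⟩ := (hcycle b).1 hc
    exact ⟨(a, b), (coneD_apply_eq_zero_iff _).2 hab, by simp⟩

theorem nonempty_coneHomology_equiv_of_ker
    (hdA : dA₁ ∘ₗ dA₀ = 0) (hS : dB₁ ∘ₗ S₀ = S₁ ∘ₗ dA₀) (hS₀ : Function.Surjective S₀)
    {I₁ : C₁ →ₗ[Λ] A₁} {I₂ : C₂ →ₗ[Λ] A₂} (hI₂ : Function.Injective I₂)
    (hrange : LinearMap.range I₁ = LinearMap.ker S₁) (hI : dA₁ ∘ₗ I₁ = I₂ ∘ₗ dC₁)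
    (hboundary : ∀ c, c ∈ LinearMap.range dC₀ ↔ ∃ x y, dA₀ x = I₁ c ∧ S₀ x = dB₀ y) :
    Nonempty (HomologyAt (coneD dA₀ dB₀ S₀) (coneD dA₁ dB₁ S₁) ≃ₗ[Λ] HomologyAt dC₀ dC₁) := by
  have hSI (c : C₁) : S₁ (I₁ c) = 0 := hrange.le ⟨c, rfl⟩
  have hId (c : C₁) : dA₁ (I₁ c) = I₂ (dC₁ c) := LinearMap.congr_fun hI c
  have hZ (c : C₁) (hc : dC₁ c = 0) : coneD dA₁ dB₁ S₁ (LinearMap.inl Λ A₁ B₁ (I₁ c)) = 0 :=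
    (coneD_apply_eq_zero_iff _).2 (by simp [hId, hc, hSI])
  have hmem (c : C₁) : LinearMap.inl Λ A₁ B₁ (I₁ c) ∈ LinearMap.range (coneD dA₀ dB₀ S₀) ↔
      c ∈ LinearMap.range dC₀ := by
    simp only [hboundary, mem_range_coneD_iff, LinearMap.inl_apply, sub_eq_zero]
  have hB : LinearMap.range dC₀ ≤
      (LinearMap.range (coneD dA₀ dB₀ S₀)).comap (LinearMap.inl Λ A₁ B₁ ∘ₗ I₁) :=
    fun c hc => (hmem c).2 hc
  refine ⟨(LinearEquiv.ofBijective (HomologyAt.map (LinearMap.inl Λ A₁ B₁ ∘ₗ I₁) hZ hB)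
    (HomologyAt.map_bijective (fun c _ hc => (hmem c).1 hc) ?_)).symm⟩
  rintro ⟨a, b⟩ hz
  obtain ⟨ha, hab⟩ := (coneD_apply_eq_zero_iff _).1 hz
  obtain ⟨x, rfl⟩ := hS₀ b
  have hSx : dB₁ (S₀ x) = S₁ (dA₀ x) := LinearMap.congr_fun hS x
  obtain ⟨c, hc⟩ : a - dA₀ x ∈ LinearMap.range I₁ := by
    rw [hrange, LinearMap.mem_ker, map_sub, hab, hSx, sub_self]
  refine ⟨c, hI₂ ?_, (mem_range_coneD_iff _).2 ⟨-x, 0, by simp [hc], by simp⟩⟩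
  calc
    I₂ (dC₁ c) = dA₁ a - dA₁ (dA₀ x) := by rw [← hId, hc, map_sub]
    _ = I₂ 0 := by
      rw [ha, show dA₁ (dA₀ x) = 0 from LinearMap.congr_fun hdA x, sub_zero, map_zero]

theorem coker_cycle_iff (hdB : dB₁ ∘ₗ dB₀ = 0) (hS : dB₁ ∘ₗ S₀ = S₁ ∘ₗ dA₀)
    (hS₁ : Function.Injective S₁) {P₀ : B₀ →ₗ[Λ] C₀} {P₁ : B₁ →ₗ[Λ] C₁}
    (hker : LinearMap.ker P₁ = LinearMap.range S₀) (hP : dC₀ ∘ₗ P₀ = P₁ ∘ₗ dB₀) (b : B₀) :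
    dC₀ (P₀ b) = 0 ↔ ∃ a, dA₀ a = 0 ∧ S₀ a = dB₀ b := by
  rw [show dC₀ (P₀ b) = P₁ (dB₀ b) from LinearMap.congr_fun hP b, ← LinearMap.mem_ker, hker]
  constructor
  · rintro ⟨a, ha⟩
    have hSda : S₁ (dA₀ a) = S₁ 0 := calc
      S₁ (dA₀ a) = dB₁ (S₀ a) := (LinearMap.congr_fun hS a).symm
      _ = dB₁ (dB₀ b) := by rw [ha]
      _ = S₁ 0 := (LinearMap.congr_fun hdB b).trans (map_zero S₁).symm
    exact ⟨a, hS₁ hSda, ha⟩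
  · rintro ⟨a, -, ha⟩
    exact ⟨a, ha⟩

theorem ker_boundary_iff (hdA : dA₁ ∘ₗ dA₀ = 0) (hS : dB₁ ∘ₗ S₀ = S₁ ∘ₗ dA₀)
    (hS₀ : Function.Surjective S₀) {I₁ : C₁ →ₗ[Λ] A₁} {I₂ : C₂ →ₗ[Λ] A₂}
    (hI₂ : Function.Injective I₂) (hrange : LinearMap.range I₁ = LinearMap.ker S₁)
    (hI : dA₁ ∘ₗ I₁ = I₂ ∘ₗ dC₁) (c : C₂) :
    c ∈ LinearMap.range dC₁ ↔ ∃ x y, dA₁ x = I₂ c ∧ S₁ x = dB₁ y := by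
  have hId (c : C₁) : dA₁ (I₁ c) = I₂ (dC₁ c) := LinearMap.congr_fun hI c
  constructor
  · rintro ⟨c, rfl⟩
    have hSI : S₁ (I₁ c) = 0 := hrange.le ⟨c, rfl⟩
    exact ⟨I₁ c, 0, hId c, by rw [hSI, map_zero]⟩
  · rintro ⟨x, y, hx, hy⟩
    obtain ⟨u, rfl⟩ := hS₀ y
    obtain ⟨c', hc'⟩ : x - dA₀ u ∈ LinearMap.range I₁ := by
      rw [hrange, LinearMap.mem_ker, map_sub, hy, sub_eq_zero]
      exact LinearMap.congr_fun hS u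
    refine ⟨c', hI₂ ?_⟩
    rw [← hId, hc', map_sub, hx, show dA₁ (dA₀ u) = 0 from LinearMap.congr_fun hdA u, sub_zero]

section Junction

variable {Sinv : B₂ →ₗ[Λ] A₁} {P₁ : B₁ →ₗ[Λ] C₁} {I₂ : C₂ →ₗ[Λ] A₂}

theorem junction_cycle_iff (hleft : Function.LeftInverse Sinv S₁)
    (hright : Function.RightInverse Sinv S₁) (hI₂ : Function.Injective I₂)
    (hD : ∀ b, I₂ (dC₁ (P₁ b)) = dA₁ (Sinv (dB₁ b))) (b : B₁) :
    dC₁ (P₁ b) = 0 ↔ ∃ a, dA₁ a = 0 ∧ S₁ a = dB₁ b := by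
  rw [← map_eq_zero_iff I₂ hI₂, hD]
  constructor
  · exact fun h => ⟨Sinv (dB₁ b), h, hright _⟩
  · rintro ⟨a, ha, hab⟩
    rw [← hab, hleft, ha]

theorem junction_boundary_iff (hleft : Function.LeftInverse Sinv S₁)
    (hright : Function.RightInverse Sinv S₁) (hI₂ : Function.Injective I₂)
    (hP₁ : Function.Surjective P₁) (hD : ∀ b, I₂ (dC₁ (P₁ b)) = dA₁ (Sinv (dB₁ b))) (c : C₂) :
    c ∈ LinearMap.range dC₁ ↔ ∃ x y, dA₁ x = I₂ c ∧ S₁ x = dB₁ y := by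
  constructor
  · rintro ⟨c, rfl⟩
    obtain ⟨b, rfl⟩ := hP₁ c
    exact ⟨Sinv (dB₁ b), b, (hD b).symm, hright _⟩
  · rintro ⟨x, y, hx, hy⟩
    exact ⟨P₁ y, hI₂ (by rw [hD, ← hy, hleft, hx])⟩

end Junction

end Output

end Cone

/-- Short exact sequence for the cohomology of the BGG output complex.  Let
`A`, `B` be cochain complexes with degree-one chain maps `S i : A i → B (i+1)`, with `S i`
injective for `i < j+1`, `S (j+1)` bijective (with inverse `Sinv`), `S i` surjective for
`i > j+1`.  Let `Cx` be the output complex: `Cx i = coker S^{i-1}` for `i ≤ j+1`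
(realized by surjections `P i : B i → Cx i` with kernel `im S^{i-1}`, commuting with the
differentials), `Cx i = ker S^i` for `i > j+1` (realized by injections `I i : Cx i → A i`
with range `ker S i`, commuting with the differentials), and with connecting differential
`D = d ∘ (S^{j+1})⁻¹ ∘ d` at the junction.  Then for every degree there is a short exact
sequence `0 → coker S̃^{i-1} → H^i(Cx) → ker S̃^i → 0`, where
`S̃^i : H^i(A) → H^{i+1}(B)` is the map induced on cohomology by `S`. -/
theorem stmt4_bgg_output_cohomology_short_exact_sequence
    (A B Cx : ℤ → Type)
    [∀ i, AddCommGroup (A i)] [∀ i, Module R (A i)]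
    [∀ i, AddCommGroup (B i)] [∀ i, Module R (B i)]
    [∀ i, AddCommGroup (Cx i)] [∀ i, Module R (Cx i)]
    (dA : ∀ i : ℤ, A i →ₗ[R] A (i + 1))
    (dB : ∀ i : ℤ, B i →ₗ[R] B (i + 1))
    (dCx : ∀ i : ℤ, Cx i →ₗ[R] Cx (i + 1))
    (hddA : ∀ i : ℤ, (dA (i + 1)).comp (dA i) = 0)
    (hddB : ∀ i : ℤ, (dB (i + 1)).comp (dB i) = 0)
    (hddCx : ∀ i : ℤ, (dCx (i + 1)).comp (dCx i) = 0)
    (S : ∀ i : ℤ, A i →ₗ[R] B (i + 1))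
    (hcomm : ∀ i : ℤ, (dB (i + 1)).comp (S i) = (S (i + 1)).comp (dA i))
    (j : ℤ)
    (hinj : ∀ i : ℤ, i < j + 1 → Function.Injective (S i))
    (Sinv : B (j + 1 + 1) →ₗ[R] A (j + 1))
    (hSinv₁ : ∀ b : B (j + 1 + 1), S (j + 1) (Sinv b) = b)
    (hSinv₂ : ∀ a : A (j + 1), Sinv (S (j + 1) a) = a)
    (hsurj : ∀ i : ℤ, j + 1 < i → Function.Surjective (S i))
    -- in degrees i ≤ j+1, Cx is the cokernel of S, via the projections P
    (P : ∀ i : ℤ, B i →ₗ[R] Cx i)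
    (hP_surj : ∀ i : ℤ, i ≤ j + 1 → Function.Surjective (P i))
    (hP_ker : ∀ i : ℤ, i + 1 ≤ j + 1 → LinearMap.ker (P (i + 1)) = LinearMap.range (S i))
    (hP_comm : ∀ i : ℤ, i + 1 ≤ j + 1 →
      (dCx i).comp (P i) = (P (i + 1)).comp (dB i))
    -- in degrees i > j+1, Cx is the kernel of S, via the inclusions I
    (I : ∀ i : ℤ, Cx i →ₗ[R] A i)
    (hI_inj : ∀ i : ℤ, j + 1 < i → Function.Injective (I i))
    (hI_range : ∀ i : ℤ, j + 1 < i → LinearMap.range (I i) = LinearMap.ker (S i))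
    (hI_comm : ∀ i : ℤ, j + 1 < i → (dA i).comp (I i) = (I (i + 1)).comp (dCx i))
    -- at the junction, the differential of Cx is D = d ∘ (S^{j+1})⁻¹ ∘ d
    (hjunction : ∀ v : B (j + 1),
      I (j + 1 + 1) (dCx (j + 1) (P (j + 1) v)) = dA (j + 1) (Sinv (dB (j + 1) v))) :
    -- conclusion: 0 → coker S̃ → H(Cx) → ker S̃ → 0 in every degree
    ∀ n : ℤ,
      ∃ (f : (Hmod R (fun m => dB (m + 1)) n ⧸
                LinearMap.range (inducedH R dA (fun m => dB (m + 1)) S hcomm n))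
              →ₗ[R] Hmod R dCx (n + 1))
        (g : Hmod R dCx (n + 1) →ₗ[R] Hmod R dA (n + 1)),
        Function.Injective f ∧
        LinearMap.range f = LinearMap.ker g ∧
        LinearMap.range g = LinearMap.ker (inducedH R dA (fun m => dB (m + 1)) S hcomm (n + 1)) := by
  intro n
  have hS_inj (i : ℤ) (hi : i ≤ j + 1) : Function.Injective (S i) :=
    hi.lt_or_eq.elim (hinj i) fun h => h ▸ Function.LeftInverse.injective hSinv₂
  have hS_surj (i : ℤ) (hi : j + 1 ≤ i) : Function.Surjective (S i) :=
    hi.lt_or_eq.elim (hsurj i) fun h => h ▸ Function.RightInverse.surjective hSinv₁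
  suffices h : Nonempty (HomologyAt (coneD (dA (n + 1)) (dB (n + 1)) (S (n + 1)))
      (coneD (dA (n + 1 + 1)) (dB (n + 1 + 1)) (S (n + 1 + 1))) ≃ₗ[R] Hmod R dCx (n + 1)) from
    h.elim (exists_shortExact_of_coneHomology_equiv (hcomm n) (hcomm (n + 1)) (hcomm (n + 1 + 1)))
  obtain hlow | hhigh := le_or_gt (n + 1 + 1) (j + 1)
  · refine nonempty_coneHomology_equiv_of_coker (hddB _) (hcomm _) (hS_inj _ hlow)
      (hP_surj _ (by lia)) (hP_surj _ hlow) (hP_ker _ hlow) (hP_comm _ hlow) ?_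
    obtain hlt | hj := hlow.lt_or_eq
    · exact coker_cycle_iff (hddB _) (hcomm _) (hS_inj _ hlt) (hP_ker _ hlt) (hP_comm _ hlt)
    · obtain rfl : n + 1 = j := by lia
      exact junction_cycle_iff hSinv₂ hSinv₁ (hI_inj _ (by lia)) hjunction
  · refine nonempty_coneHomology_equiv_of_ker (hddA _) (hcomm _) (hS_surj _ (by lia))
      (hI_inj _ (by lia)) (hI_range _ hhigh) (hI_comm _ hhigh) ?_
    obtain hlt | rfl := (show j ≤ n by lia).lt_or_eq
    · exact ker_boundary_iff (hddA _) (hcomm _) (hS_surj _ (by lia)) (hI_inj _ hhigh)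
        (hI_range _ (by lia)) (hI_comm _ (by lia))
    · exact junction_boundary_iff hSinv₂ hSinv₁ (hI_inj _ hhigh) (hP_surj _ le_rfl) hjunction
end

section
/- If additionally the induced maps on cohomology S̃^i : H^i(A•) → H^{i+1}(B•) are all zero, then for each i there is a short exact sequence 0 → H^i(B•) → H^i(C•) → H^i(A•) → 0, where the first map is induced by the projections/inclusions relating B• and C•, and the second by those relating C• and A•. -/
open Function

variable (R : Type) [CommRing R]

/-!
The twisted complex `B ⊕ A` with differential `(b, a) ↦ (d b - S a, -d a)` is the mapping cone
of `S`. It sits in a short exact sequence `0 → B → B ⊕ A → A → 0` whose connecting map is, up to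
sign, the one induced by `S` on cohomology. When this vanishes, the long exact sequence breaks up
into short exact sequences, so it is enough to identify the cohomology of the cone with that of
the output complex. Up to and including the degree of the bijection, `(b, a) ↦ [b] ∈ coker S` is an
isomorphism on cohomology; above it, `a ↦ (0, a)` is one from `ker S`. In the degree of the
bijection and the next one, this rests on the formula `d S⁻¹ d`, which makes the cocycles,
respectively the coboundaries, of the output complex correspond to those of the cone.
-/

section Subquotient

variable {K M N : Type*} [Ring K] [AddCommGroup M] [Module K M] [AddCommGroup N] [Module K N]
  {Z B : Submodule K M} {Z' B' : Submodule K N}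

/-- The map `Z / (B ∩ Z) → Z' / (B' ∩ Z')` of subquotients induced by `f`. For cocycles and
coboundaries it is the map on cohomology; only a condition in the degree at hand is imposed
on `f`, since some of the maps used below are not chain maps in every degree or commute with the
differentials only up to sign. -/
def subquotientMap (f : M →ₗ[K] N) (hZ : ∀ x ∈ Z, f x ∈ Z') (hB : ∀ x ∈ Z, x ∈ B → f x ∈ B') :
    (Z ⧸ B.comap Z.subtype) →ₗ[K] (Z' ⧸ B'.comap Z'.subtype) :=
  Submodule.mapQ _ _ (f.restrict hZ) fun x hx => hB x x.2 hx

variable {f : M →ₗ[K] N} (hZ : ∀ x ∈ Z, f x ∈ Z') (hB : ∀ x ∈ Z, x ∈ B → f x ∈ B')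

theorem subquotientMap_mk_eq_zero_iff (x : Z) :
    subquotientMap f hZ hB (Submodule.Quotient.mk x) = 0 ↔ f x ∈ B' :=
  Submodule.Quotient.mk_eq_zero _

theorem subquotientMap_injective (h : ∀ x ∈ Z, f x ∈ B' → x ∈ B) :
    Injective (subquotientMap f hZ hB) := by
  rw [injective_iff_map_eq_zero]
  intro q hq
  obtain ⟨x, rfl⟩ := Submodule.Quotient.mk_surjective _ q
  rw [subquotientMap_mk_eq_zero_iff] at hq
  exact (Submodule.Quotient.mk_eq_zero _).2 (h x x.2 hq)

theorem subquotientMap_surjective (h : ∀ y ∈ Z', ∃ x ∈ Z, f x - y ∈ B') :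
    Surjective (subquotientMap f hZ hB) := by
  intro q
  obtain ⟨y, rfl⟩ := Submodule.Quotient.mk_surjective _ q
  obtain ⟨x, hx, hxy⟩ := h y y.2
  exact ⟨Submodule.Quotient.mk ⟨x, hx⟩, (Submodule.Quotient.eq _).2 hxy⟩

theorem subquotientMap_exact {L : Type*} [AddCommGroup L] [Module K L]
    {Z'' B'' : Submodule K L} {g : N →ₗ[K] L} (hZ' : ∀ y ∈ Z', g y ∈ Z'')
    (hB' : ∀ y ∈ Z', y ∈ B' → g y ∈ B'') (hgf : ∀ x ∈ Z, g (f x) ∈ B'')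
    (h : ∀ y ∈ Z', g y ∈ B'' → ∃ x ∈ Z, f x - y ∈ B') :
    Exact (subquotientMap f hZ hB) (subquotientMap g hZ' hB') := by
  intro q
  constructor
  · obtain ⟨y, rfl⟩ := Submodule.Quotient.mk_surjective _ q
    intro hy
    obtain ⟨x, hx, hxy⟩ := h y y.2 ((subquotientMap_mk_eq_zero_iff hZ' hB' y).1 hy)
    exact ⟨Submodule.Quotient.mk ⟨x, hx⟩, (Submodule.Quotient.eq _).2 hxy⟩
  · rintro ⟨p, rfl⟩
    obtain ⟨x, rfl⟩ := Submodule.Quotient.mk_surjective _ p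
    exact (subquotientMap_mk_eq_zero_iff hZ' hB' ⟨f x, hZ x x.2⟩).2 (hgf x x.2)

/-- The isomorphism of subquotients induced by `f`, when this maps `Z` onto `Z'` modulo `B'` and
pulls `B'` back to `B` within `Z`. -/
noncomputable def subquotientEquiv (f : M →ₗ[K] N) (hZ : ∀ x ∈ Z, f x ∈ Z')
    (hB : ∀ x ∈ Z, x ∈ B ↔ f x ∈ B') (h : ∀ y ∈ Z', ∃ x ∈ Z, f x - y ∈ B') :
    (Z ⧸ B.comap Z.subtype) ≃ₗ[K] (Z' ⧸ B'.comap Z'.subtype) :=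
  LinearEquiv.ofBijective (subquotientMap f hZ fun x hx => (hB x hx).1)
    ⟨subquotientMap_injective _ _ fun x hx => (hB x hx).2, subquotientMap_surjective _ _ h⟩

end Subquotient

section Cone

variable {R} {A B C : ℤ → Type}
  [∀ i, AddCommGroup (A i)] [∀ i, Module R (A i)]
  [∀ i, AddCommGroup (B i)] [∀ i, Module R (B i)]
  [∀ i, AddCommGroup (C i)] [∀ i, Module R (C i)]

theorem map_ker_le_range_of_inducedH_eq_zero {dA : ∀ i, A i →ₗ[R] A (i + 1)}
    {dB : ∀ i, B i →ₗ[R] B (i + 1)} {f : ∀ i, A i →ₗ[R] B i}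
    {hf : ∀ i, dB i ∘ₗ f i = f (i + 1) ∘ₗ dA i} {n : ℤ} (h : inducedH R dA dB f hf n = 0) :
    (LinearMap.ker (dA (n + 1))).map (f (n + 1)) ≤ LinearMap.range (dB n) := by
  rintro _ ⟨a, ha, rfl⟩
  have ha0 := LinearMap.congr_fun h (Submodule.Quotient.mk ⟨a, ha⟩)
  exact (Submodule.Quotient.mk_eq_zero (cobounds R dB n)).1 ha0

/-- The differential of the mapping cone of `S`, regarded as a chain map `A[-1] → B`. The sign
on `A` makes it square to zero when `S` commutes with the differentials. -/
def coneDifferential (dA : ∀ i, A i →ₗ[R] A (i + 1)) (dB : ∀ i, B i →ₗ[R] B (i + 1))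
    (S : ∀ i, A i →ₗ[R] B (i + 1)) (i : ℤ) : B i × A i →ₗ[R] B (i + 1) × A (i + 1) :=
  ((dB i).coprod (-S i)).prod (-dA i ∘ₗ LinearMap.snd R (B i) (A i))

variable {dA : ∀ i, A i →ₗ[R] A (i + 1)} {dB : ∀ i, B i →ₗ[R] B (i + 1)}
  {dC : ∀ i, C i →ₗ[R] C (i + 1)} {S : ∀ i, A i →ₗ[R] B (i + 1)} {n : ℤ}

theorem mem_ker_coneDifferential {x : B n × A n} :
    x ∈ LinearMap.ker (coneDifferential dA dB S n) ↔ dB n x.1 = S n x.2 ∧ dA n x.2 = 0 := by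
  simp [coneDifferential, ← sub_eq_add_neg, sub_eq_zero]

theorem mem_range_coneDifferential {x : B (n + 1) × A (n + 1)} :
    x ∈ LinearMap.range (coneDifferential dA dB S n) ↔
      ∃ b a, dB n b + S n a = x.1 ∧ dA n a = x.2 := by
  constructor
  · rintro ⟨⟨b, a⟩, rfl⟩
    exact ⟨b, -a, by simp [coneDifferential], by simp [coneDifferential]⟩
  · rintro ⟨b, a, hb, ha⟩
    exact ⟨(b, -a), Prod.ext (by simpa [coneDifferential]) (by simpa [coneDifferential])⟩

variable (dA dB S n) in
/-- The map from the cohomology of `B` to that of the cone induced by `b ↦ (b, 0)`. -/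
def coneInl : Hmod R dB n →ₗ[R] Hmod R (coneDifferential dA dB S) n :=
  subquotientMap (LinearMap.inl R (B (n + 1)) (A (n + 1)))
    (fun b hb => mem_ker_coneDifferential.2 (by simpa using hb))
    (by
      rintro _ - ⟨b, rfl⟩
      exact mem_range_coneDifferential.2 ⟨b, 0, by simp, by simp⟩)

variable (dA dB S n) in
/-- The map from the cohomology of the cone to that of `A` induced by `(b, a) ↦ a`. -/
def coneSnd : Hmod R (coneDifferential dA dB S) n →ₗ[R] Hmod R dA n :=
  subquotientMap (LinearMap.snd R (B (n + 1)) (A (n + 1)))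
    (fun _ hx => (mem_ker_coneDifferential.1 hx).2)
    (fun _ _ hx => by
      obtain ⟨-, a, -, ha⟩ := mem_range_coneDifferential.1 hx
      exact ⟨a, ha⟩)

theorem coneInl_injective
    (hS : (LinearMap.ker (dA n)).map (S n) ≤ LinearMap.range (dB n)) :
    Injective (coneInl dA dB S n) := by
  refine subquotientMap_injective _ _ fun b _ hb => ?_
  obtain ⟨b', a, hb', ha⟩ := mem_range_coneDifferential.1 hb
  have hSa : S n a ∈ LinearMap.range (dB n) := hS ⟨a, ha, rfl⟩
  have hbSa : dB n b' + S n a = b := hb'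
  exact hbSa ▸ add_mem ⟨b', rfl⟩ hSa

theorem coneInl_coneSnd_exact (hcomm : dB (n + 1) ∘ₗ S n = S (n + 1) ∘ₗ dA n) :
    Exact (coneInl dA dB S n) (coneSnd dA dB S n) := by
  refine subquotientMap_exact _ _ _ _ (fun _ _ => zero_mem _) ?_
  rintro ⟨b, _⟩ hx ⟨a, rfl⟩
  have hb : dB (n + 1) b = S (n + 1) (dA n a) := (mem_ker_coneDifferential.1 hx).1
  refine ⟨b - S n a, ?_, mem_range_coneDifferential.2 ⟨0, -a, by simp, by simp⟩⟩
  rw [LinearMap.mem_ker, map_sub, hb, sub_eq_zero]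
  exact (LinearMap.congr_fun hcomm a).symm

theorem coneSnd_surjective
    (hS : (LinearMap.ker (dA (n + 1))).map (S (n + 1)) ≤ LinearMap.range (dB (n + 1))) :
    Surjective (coneSnd dA dB S n) := by
  refine subquotientMap_surjective _ _ fun a ha => ?_
  obtain ⟨b, hb⟩ := hS ⟨a, ha, rfl⟩
  exact ⟨(b, a), mem_ker_coneDifferential.2 ⟨hb, ha⟩, by simp⟩

theorem exists_shortExact_of_coneEquiv
    (hcomm : ∀ i, dB (i + 1) ∘ₗ S i = S (i + 1) ∘ₗ dA i)
    (hS : ∀ i, (LinearMap.ker (dA i)).map (S i) ≤ LinearMap.range (dB i))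
    (e : Hmod R (coneDifferential dA dB S) n ≃ₗ[R] Hmod R dC n) :
    ∃ (f : Hmod R dB n →ₗ[R] Hmod R dC n) (g : Hmod R dC n →ₗ[R] Hmod R dA n),
      Injective f ∧ LinearMap.range f = LinearMap.ker g ∧ Surjective g :=
  ⟨e ∘ₗ coneInl dA dB S n, coneSnd dA dB S n ∘ₗ e.symm,
    e.injective.comp (coneInl_injective (hS n)),
    (LinearMap.exact_iff.1
      ((e.conj_exact_iff_exact _ _).2 (coneInl_coneSnd_exact (hcomm n)))).symm,
    (coneSnd_surjective (hS (n + 1))).comp e.symm.surjective⟩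

theorem mem_range_coneDifferential_iff_of_cokernel {P : ∀ i, B i →ₗ[R] C i}
    (hdB : dB (n + 1) ∘ₗ dB n = 0) (hcomm : dB (n + 1) ∘ₗ S n = S (n + 1) ∘ₗ dA n)
    (hS : Injective (S (n + 1))) (hP : Surjective (P n))
    (hker : LinearMap.ker (P (n + 1)) = LinearMap.range (S n))
    (hPd : dC n ∘ₗ P n = P (n + 1) ∘ₗ dB n) {x : B (n + 1) × A (n + 1)}
    (hx : dB (n + 1) x.1 = S (n + 1) x.2) :
    x ∈ LinearMap.range (coneDifferential dA dB S n) ↔ P (n + 1) x.1 ∈ LinearMap.range (dC n) := by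
  have hdP (b : B n) : dC n (P n b) = P (n + 1) (dB n b) := LinearMap.congr_fun hPd b
  rw [mem_range_coneDifferential]
  constructor
  · rintro ⟨b, a, hb, -⟩
    have hPS : P (n + 1) (S n a) = 0 := hker.ge ⟨a, rfl⟩
    exact ⟨P n b, by rw [← hb, map_add, hPS, add_zero, hdP]⟩
  · rintro ⟨c, hc⟩
    obtain ⟨b, rfl⟩ := hP c
    obtain ⟨a, ha⟩ : x.1 - dB n b ∈ LinearMap.range (S n) :=
      hker.le (by rw [LinearMap.mem_ker, map_sub, ← hdP, hc, sub_self])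
    have hSda : S (n + 1) (dA n a) = S (n + 1) x.2 :=
      calc S (n + 1) (dA n a) = dB (n + 1) (S n a) := (LinearMap.congr_fun hcomm a).symm
        _ = dB (n + 1) x.1 - (dB (n + 1) ∘ₗ dB n) b := by rw [ha, map_sub, LinearMap.comp_apply]
        _ = S (n + 1) x.2 := by rw [hdB, LinearMap.zero_apply, sub_zero, hx]
    exact ⟨b, a, by rw [ha, add_sub_cancel], hS hSda⟩

/-- The isomorphism from the cohomology of the cone to that of `C` induced by `(b, a) ↦ P b`, in a
degree where `C` is the cokernel of `S` and `S` is injective. The hypothesis `hZ` describes the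
cocycles of `C` in a way that is valid both below the junction and at it. -/
noncomputable def coneEquivOfCokernel {P : ∀ i, B i →ₗ[R] C i}
    (hdB : dB (n + 1) ∘ₗ dB n = 0) (hcomm : dB (n + 1) ∘ₗ S n = S (n + 1) ∘ₗ dA n)
    (hS : Injective (S (n + 1))) (hP₀ : Surjective (P n)) (hP₁ : Surjective (P (n + 1)))
    (hker : LinearMap.ker (P (n + 1)) = LinearMap.range (S n))
    (hPd : dC n ∘ₗ P n = P (n + 1) ∘ₗ dB n)
    (hZ : (LinearMap.ker (dC (n + 1))).comap (P (n + 1)) =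
      ((LinearMap.ker (dA (n + 1))).map (S (n + 1))).comap (dB (n + 1))) :
    Hmod R (coneDifferential dA dB S) n ≃ₗ[R] Hmod R dC n :=
  subquotientEquiv (P (n + 1) ∘ₗ LinearMap.fst R (B (n + 1)) (A (n + 1)))
    (fun x hx => by
      obtain ⟨hb, ha⟩ := mem_ker_coneDifferential.1 hx
      exact hZ.ge ⟨x.2, ha, hb.symm⟩)
    (fun _ hx => mem_range_coneDifferential_iff_of_cokernel hdB hcomm hS hP₀ hker hPd
      (mem_ker_coneDifferential.1 hx).1)
    (fun c hc => by
      obtain ⟨b, rfl⟩ := hP₁ c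
      obtain ⟨a, ha, hb⟩ := hZ.le hc
      exact ⟨(b, a), mem_ker_coneDifferential.2 ⟨hb.symm, ha⟩, by simp⟩)

theorem inr_mem_range_coneDifferential {a : A (n + 1)} :
    ((0, a) : B (n + 1) × A (n + 1)) ∈ LinearMap.range (coneDifferential dA dB S n) ↔
      a ∈ ((LinearMap.range (dB n)).comap (S n)).map (dA n) := by
  rw [mem_range_coneDifferential]
  constructor
  · rintro ⟨b, a', hb, ha⟩
    exact ⟨a', ⟨-b, (map_neg _ _).trans (neg_eq_of_add_eq_zero_right hb)⟩, ha⟩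
  · rintro ⟨a', ⟨b, hb⟩, ha⟩
    exact ⟨-b, a', by simp [hb], ha⟩

/-- The isomorphism from the cohomology of `C` to that of the cone induced by `c ↦ (0, I c)`, in a
degree where `C` is the kernel of `S` and `S` is surjective in the previous degree. The hypothesis
`hB` describes the coboundaries of `C` in a way that is valid both above the junction and right
after it. -/
noncomputable def coneEquivOfKernel {I : ∀ i, C i →ₗ[R] A i}
    (hdA : dA (n + 1) ∘ₗ dA n = 0) (hcomm : dB (n + 1) ∘ₗ S n = S (n + 1) ∘ₗ dA n)
    (hS : Surjective (S n)) (hI₁ : Injective (I (n + 1))) (hI₂ : Injective (I (n + 1 + 1)))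
    (hrange : LinearMap.range (I (n + 1)) = LinearMap.ker (S (n + 1)))
    (hId : dA (n + 1) ∘ₗ I (n + 1) = I (n + 1 + 1) ∘ₗ dC (n + 1))
    (hB : (LinearMap.range (dC n)).map (I (n + 1)) =
      ((LinearMap.range (dB n)).comap (S n)).map (dA n)) :
    Hmod R dC n ≃ₗ[R] Hmod R (coneDifferential dA dB S) n :=
  have mem_ker_iff (c : C (n + 1)) : dA (n + 1) (I (n + 1) c) = 0 ↔ dC (n + 1) c = 0 :=
    (LinearMap.congr_fun hId c).congr_left.trans (map_eq_zero_iff _ hI₂)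
  subquotientEquiv (LinearMap.inr R (B (n + 1)) (A (n + 1)) ∘ₗ I (n + 1))
    (fun c hc => by
      have hSI : S (n + 1) (I (n + 1) c) = 0 := hrange.le ⟨c, rfl⟩
      exact mem_ker_coneDifferential.2 ⟨by simp [hSI], (mem_ker_iff c).2 hc⟩)
    (fun c _ => by
      rw [LinearMap.comp_apply, LinearMap.inr_apply, inr_mem_range_coneDifferential, ← hB]
      exact (hI₁.mem_set_image (s := LinearMap.range (dC n))).symm)
    (fun x hx => by
      obtain ⟨hb, ha⟩ := mem_ker_coneDifferential.1 hx
      obtain ⟨a, hSa⟩ := hS x.1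
      have hdSa : dB (n + 1) (S n a) = S (n + 1) (dA n a) := LinearMap.congr_fun hcomm a
      have hdda : dA (n + 1) (dA n a) = 0 := LinearMap.congr_fun hdA a
      obtain ⟨c, hc⟩ : x.2 - dA n a ∈ LinearMap.range (I (n + 1)) :=
        hrange.ge (by rw [LinearMap.mem_ker, map_sub, ← hb, ← hSa, hdSa, sub_self])
      exact ⟨c, (mem_ker_iff c).1 (by rw [hc, map_sub, ha, hdda, sub_zero]),
        mem_range_coneDifferential.2 ⟨0, -a, by simp [hSa], by simp [hc]⟩⟩)

end Cone

section OutputDifferential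

variable {K A₁ A₂ A₃ B₁ B₂ B₃ C₁ C₂ C₃ : Type*} [Ring K]
  [AddCommGroup A₁] [Module K A₁] [AddCommGroup A₂] [Module K A₂] [AddCommGroup A₃] [Module K A₃]
  [AddCommGroup B₁] [Module K B₁] [AddCommGroup B₂] [Module K B₂] [AddCommGroup B₃] [Module K B₃]
  [AddCommGroup C₁] [Module K C₁] [AddCommGroup C₂] [Module K C₂] [AddCommGroup C₃] [Module K C₃]

theorem comap_ker_eq_of_cokernel {dA : A₁ →ₗ[K] A₂} {dB : B₁ →ₗ[K] B₂} {dB' : B₂ →ₗ[K] B₃}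
    {dC : C₁ →ₗ[K] C₂} {S : A₁ →ₗ[K] B₂} {S' : A₂ →ₗ[K] B₃} {P : B₁ →ₗ[K] C₁} {P' : B₂ →ₗ[K] C₂}
    (hdB : dB' ∘ₗ dB = 0) (hcomm : dB' ∘ₗ S = S' ∘ₗ dA) (hS' : Injective S')
    (hker : LinearMap.ker P' = LinearMap.range S) (hPd : dC ∘ₗ P = P' ∘ₗ dB) :
    (LinearMap.ker dC).comap P = ((LinearMap.ker dA).map S).comap dB := by
  have ker_dA : LinearMap.ker dA = (LinearMap.ker dB').comap S := by
    rw [← LinearMap.ker_comp, hcomm,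
      LinearMap.ker_comp_of_ker_eq_bot _ (LinearMap.ker_eq_bot.2 hS')]
  rw [← LinearMap.ker_comp, hPd, LinearMap.ker_comp, hker, ker_dA, Submodule.map_comap_eq,
    Submodule.comap_inf, ← LinearMap.ker_comp dB dB', hdB, LinearMap.ker_zero, inf_top_eq]

theorem comap_ker_eq_of_junction {dA : A₁ →ₗ[K] A₂} {dB : B₁ →ₗ[K] B₂} {dC : C₁ →ₗ[K] C₂}
    {S : A₁ →ₗ[K] B₂} {T : B₂ →ₗ[K] A₁} {P : B₁ →ₗ[K] C₁} {I : C₂ →ₗ[K] A₂}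
    (hTS : LeftInverse T S) (hST : RightInverse T S) (hI : Injective I)
    (hD : ∀ b, I (dC (P b)) = dA (T (dB b))) :
    (LinearMap.ker dC).comap P = ((LinearMap.ker dA).map S).comap dB := by
  ext b
  calc dC (P b) = 0 ↔ dA (T (dB b)) = 0 := by rw [← hD, map_eq_zero_iff I hI]
    _ ↔ ∃ a, dA a = 0 ∧ S a = dB b :=
      ⟨fun h => ⟨_, h, hST _⟩, fun ⟨a, ha, hab⟩ => by rw [← hab, hTS, ha]⟩

theorem map_range_eq_of_kernel {dA : A₁ →ₗ[K] A₂} {dA' : A₂ →ₗ[K] A₃} {dB : B₂ →ₗ[K] B₃}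
    {dC : C₂ →ₗ[K] C₃} {S : A₁ →ₗ[K] B₂} {S' : A₂ →ₗ[K] B₃} {I : C₂ →ₗ[K] A₂} {I' : C₃ →ₗ[K] A₃}
    (hdA : dA' ∘ₗ dA = 0) (hcomm : dB ∘ₗ S = S' ∘ₗ dA) (hS : Surjective S)
    (hrange : LinearMap.range I = LinearMap.ker S') (hId : dA' ∘ₗ I = I' ∘ₗ dC) :
    (LinearMap.range dC).map I' = ((LinearMap.range dB).comap S').map dA' := by
  have range_dB : LinearMap.range dB = (LinearMap.range dA).map S' := by
    rw [← LinearMap.range_comp, ← hcomm,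
      LinearMap.range_comp_of_range_eq_top _ (LinearMap.range_eq_top.2 hS)]
  rw [← LinearMap.range_comp, ← hId, LinearMap.range_comp, hrange, range_dB, Submodule.comap_map_eq,
    Submodule.map_sup, ← LinearMap.range_comp dA dA', hdA, LinearMap.range_zero, bot_sup_eq]

theorem map_range_eq_of_junction {dA : A₁ →ₗ[K] A₂} {dB : B₁ →ₗ[K] B₂} {dC : C₁ →ₗ[K] C₂}
    {S : A₁ →ₗ[K] B₂} {T : B₂ →ₗ[K] A₁} {P : B₁ →ₗ[K] C₁} {I : C₂ →ₗ[K] A₂}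
    (hTS : LeftInverse T S) (hST : RightInverse T S) (hP : Surjective P)
    (hD : ∀ b, I (dC (P b)) = dA (T (dB b))) :
    (LinearMap.range dC).map I = ((LinearMap.range dB).comap S).map dA := by
  have comap_eq_map : (LinearMap.range dB).comap S = (LinearMap.range dB).map T :=
    SetLike.ext' (congrFun (Set.image_eq_preimage_of_inverse hST hTS) (LinearMap.range dB)).symm
  have hD' : (I ∘ₗ dC) ∘ₗ P = dA ∘ₗ T ∘ₗ dB := LinearMap.ext hD
  rw [comap_eq_map, ← LinearMap.range_comp, ← LinearMap.range_comp, ← LinearMap.range_comp, ← hD',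
    LinearMap.range_comp_of_range_eq_top _ (LinearMap.range_eq_top.2 hP)]

end OutputDifferential

/-- If, in addition to the BGG setup of the previous statement (output
complex `Cx` with `Cx i = coker S^{i-1}` for `i ≤ j+1` via projections `P`,
`Cx i = ker S^i` for `i > j+1` via inclusions `I`, junction differential
`D = d ∘ (S^{j+1})⁻¹ ∘ d`), the maps induced on cohomology by `S` are all zero, then for
each degree there is a short exact sequence `0 → H^i(B) → H^i(Cx) → H^i(A) → 0`, the maps
being induced by the projections/inclusions relating `B`, `Cx` and `A`. -/
theorem stmt5_bgg_output_cohomology_when_S_zero_on_cohomology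
    (A B Cx : ℤ → Type)
    [∀ i, AddCommGroup (A i)] [∀ i, Module R (A i)]
    [∀ i, AddCommGroup (B i)] [∀ i, Module R (B i)]
    [∀ i, AddCommGroup (Cx i)] [∀ i, Module R (Cx i)]
    (dA : ∀ i : ℤ, A i →ₗ[R] A (i + 1))
    (dB : ∀ i : ℤ, B i →ₗ[R] B (i + 1))
    (dCx : ∀ i : ℤ, Cx i →ₗ[R] Cx (i + 1))
    (hddA : ∀ i : ℤ, (dA (i + 1)).comp (dA i) = 0)
    (hddB : ∀ i : ℤ, (dB (i + 1)).comp (dB i) = 0)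
    (hddCx : ∀ i : ℤ, (dCx (i + 1)).comp (dCx i) = 0)
    (S : ∀ i : ℤ, A i →ₗ[R] B (i + 1))
    (hcomm : ∀ i : ℤ, (dB (i + 1)).comp (S i) = (S (i + 1)).comp (dA i))
    (j : ℤ)
    (hinj : ∀ i : ℤ, i < j + 1 → Function.Injective (S i))
    (Sinv : B (j + 1 + 1) →ₗ[R] A (j + 1))
    (hSinv₁ : ∀ b : B (j + 1 + 1), S (j + 1) (Sinv b) = b)
    (hSinv₂ : ∀ a : A (j + 1), Sinv (S (j + 1) a) = a)
    (hsurj : ∀ i : ℤ, j + 1 < i → Function.Surjective (S i))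
    -- in degrees i ≤ j+1, Cx is the cokernel of S, via the projections P
    (P : ∀ i : ℤ, B i →ₗ[R] Cx i)
    (hP_surj : ∀ i : ℤ, i ≤ j + 1 → Function.Surjective (P i))
    (hP_ker : ∀ i : ℤ, i + 1 ≤ j + 1 → LinearMap.ker (P (i + 1)) = LinearMap.range (S i))
    (hP_comm : ∀ i : ℤ, i + 1 ≤ j + 1 →
      (dCx i).comp (P i) = (P (i + 1)).comp (dB i))
    -- in degrees i > j+1, Cx is the kernel of S, via the inclusions I
    (I : ∀ i : ℤ, Cx i →ₗ[R] A i)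
    (hI_inj : ∀ i : ℤ, j + 1 < i → Function.Injective (I i))
    (hI_range : ∀ i : ℤ, j + 1 < i → LinearMap.range (I i) = LinearMap.ker (S i))
    (hI_comm : ∀ i : ℤ, j + 1 < i → (dA i).comp (I i) = (I (i + 1)).comp (dCx i))
    -- at the junction, the differential of Cx is D = d ∘ (S^{j+1})⁻¹ ∘ d
    (hjunction : ∀ v : B (j + 1),
      I (j + 1 + 1) (dCx (j + 1) (P (j + 1) v)) = dA (j + 1) (Sinv (dB (j + 1) v)))
    -- additional hypothesis: S induces the zero map on cohomology in every degree
    (hS0 : ∀ n : ℤ, inducedH R dA (fun m => dB (m + 1)) S hcomm n = 0) :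
    -- conclusion: 0 → H(B) → H(Cx) → H(A) → 0 in every degree
    ∀ n : ℤ,
      ∃ (f : Hmod R dB n →ₗ[R] Hmod R dCx n)
        (g : Hmod R dCx n →ₗ[R] Hmod R dA n),
        Function.Injective f ∧
        LinearMap.range f = LinearMap.ker g ∧
        Function.Surjective g := by
  have map_ker_le (m : ℤ) : (LinearMap.ker (dA m)).map (S m) ≤ LinearMap.range (dB m) := by
    obtain ⟨k, rfl⟩ : ∃ k, m = k + 1 := ⟨m - 1, by ring⟩
    exact map_ker_le_range_of_inducedH_eq_zero (hS0 k)
  have S_injective (i : ℤ) (hi : i ≤ j + 1) : Injective (S i) :=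
    hi.lt_or_eq.elim (hinj i) (by rintro rfl; exact LeftInverse.injective hSinv₂)
  have S_surjective (i : ℤ) (hi : j + 1 ≤ i) : Surjective (S i) :=
    hi.lt_or_eq.elim (hsurj i) (by rintro rfl; exact RightInverse.surjective hSinv₁)
  intro n
  rcases le_or_gt (n + 1) (j + 1) with hn | hn
  · refine exists_shortExact_of_coneEquiv hcomm map_ker_le (coneEquivOfCokernel (hddB n) (hcomm n)
      (S_injective _ hn) (hP_surj _ (by omega)) (hP_surj _ hn) (hP_ker n hn) (hP_comm n hn) ?_)
    obtain h | rfl : n < j ∨ n = j := by omega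
    · exact comap_ker_eq_of_cokernel (hddB _) (hcomm _) (S_injective _ (by omega))
        (hP_ker _ (by omega)) (hP_comm _ (by omega))
    · exact comap_ker_eq_of_junction hSinv₂ hSinv₁ (hI_inj _ (by omega)) hjunction
  · refine exists_shortExact_of_coneEquiv hcomm map_ker_le (coneEquivOfKernel (hddA n) (hcomm n)
      (S_surjective _ (by omega)) (hI_inj _ hn) (hI_inj _ (by omega)) (hI_range _ hn) (hI_comm _ hn)
      ?_).symm
    obtain h | rfl : j + 1 < n ∨ n = j + 1 := by omega
    · obtain ⟨m, rfl⟩ : ∃ m, n = m + 1 := ⟨n - 1, by ring⟩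
      exact map_range_eq_of_kernel (hddA _) (hcomm _) (S_surjective _ (by omega)) (hI_range _ h)
        (hI_comm _ h)
    · exact map_range_eq_of_junction hSinv₂ hSinv₁ (hP_surj _ le_rfl) hjunction
end
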